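/- Let π* be an optimal assignment for weights w, let (a,b) be an edge, and let w̄ be the weights obtained from w by replacing w(a,b) with w(a,b) + s_w(a,b) (all other weights unchanged). If (a,b) is assigned in π*, then min{f(w̄,π) : π an assignment with π(b) ≠ a} = f(w̄, π*); if (a,b) is not assigned in π*, then min{f(w̄,π) : π an assignment with π(b) = a} = f(w̄, π*). -/

import Mathlib

open Finset Filter Topology

/-- Cost of an assignment `π : T → A` under weights `w : A × T → ℝ`. -/
noncomputable def cost {A T : Type*} [Fintype T] (w : A × T → ℝ) (π : T → A) : ℝ :=
  ∑ b : T, w (π b, b)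

/-- `πs` is an optimal assignment for weights `w`: it is injective (an assignment)
and minimizes the cost among all assignments. -/
def Optimal {A T : Type*} [Fintype T] (w : A × T → ℝ) (πs : T → A) : Prop :=
  Function.Injective πs ∧ ∀ π : T → A, Function.Injective π → cost w πs ≤ cost w π

/-- `δ` is an allowable perturbation for `(w, πs)`: `πs` remains optimal for `w + δ`. -/
def Allowable {A T : Type*} [Fintype T] (w δ : A × T → ℝ) (πs : T → A) : Prop :=
  Optimal (w + δ) πs

-- The element-wise sensitivity of edge `(a, b)` for weights `w` and assignment `πs`.
open Classical in
noncomputable def sens {A T : Type*} [Fintype T] (w : A × T → ℝ) (πs : T → A)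
    (a : A) (b : T) : ℝ :=
  if πs b = a then
    sInf {c | ∃ π : T → A, Function.Injective π ∧ π b ≠ a ∧ cost w π = c} - cost w πs
  else
    cost w πs - sInf {c | ∃ π : T → A, Function.Injective π ∧ π b = a ∧ cost w π = c}

/-!
Shifting the weight of `(a, b)` by `s` adds `s` to the cost of exactly those assignments that use
`(a, b)`. If `πs` uses `(a, b)`, its cost moves by `s` while the costs of its competitors avoiding
`(a, b)` stay put; otherwise its cost stays put while the costs of its competitors using `(a, b)`
all move by `s`. The sensitivity is the gap between the two sides, so it closes this gap in
both cases.
-/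

theorem ite_add_eq_add_single {ι M : Type*} [DecidableEq ι] [AddZeroClass M] (w : ι → M) (i : ι)
    (s : M) : (fun e => if e = i then w e + s else w e) = w + Pi.single i s := by
  ext e
  by_cases he : e = i <;> simp [he]

section Cost

variable {A T : Type*} [Fintype T]

theorem cost_add (w δ : A × T → ℝ) (π : T → A) : cost (w + δ) π = cost w π + cost δ π :=
  sum_add_distrib

theorem cost_single_of_eq [DecidableEq (A × T)] {a : A} {b : T} {π : T → A} (h : π b = a)
    (s : ℝ) : cost (Pi.single (a, b) s) π = s := by
  have hne : ∀ t ≠ b, (π t, t) ≠ (a, b) := fun t ht he => ht (congrArg Prod.snd he)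
  rw [cost, Fintype.sum_eq_single b fun t ht => by rw [Pi.single_eq_of_ne (hne t ht)], h,
    Pi.single_eq_same]

theorem cost_single_of_ne [DecidableEq (A × T)] {a : A} {b : T} {π : T → A} (h : π b ≠ a)
    (s : ℝ) : cost (Pi.single (a, b) s) π = 0 := by
  have hne : ∀ t, (π t, t) ≠ (a, b) := by
    rintro t ⟨⟩
    exact h rfl
  exact sum_eq_zero fun t _ => by rw [Pi.single_eq_of_ne (hne t)]

theorem Optimal.bddBelow_cost {w : A × T → ℝ} {πs : T → A} (h : Optimal w πs) :
    BddBelow (cost w '' {π | Function.Injective π}) :=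
  ⟨cost w πs, Set.forall_mem_image.2 h.2⟩

end Cost

section AssignmentCosts

variable {A T : Type*} [Fintype T]

/-- The costs under `w` of the assignments satisfying `P`, as a set of reals; its infimum is the
constrained optimum of the assignment problem. It is spelled as the sets in `sens` are, so as to
be definitionally equal to them. -/
def assignmentCosts (w : A × T → ℝ) (P : (T → A) → Prop) : Set ℝ :=
  {c | ∃ π : T → A, Function.Injective π ∧ P π ∧ cost w π = c}

theorem assignmentCosts_add {w δ : A × T → ℝ} {P : (T → A) → Prop} {s : ℝ}
    (hδ : ∀ π, P π → cost δ π = s) :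
    assignmentCosts (w + δ) P = OrderIso.addRight s '' assignmentCosts w P := by
  have hcost : ∀ π, P π → cost (w + δ) π = cost w π + s := fun π hπ => by rw [cost_add, hδ π hπ]
  ext c
  constructor
  · rintro ⟨π, hinj, hπ, rfl⟩
    exact ⟨cost w π, ⟨π, hinj, hπ, rfl⟩, (hcost π hπ).symm⟩
  · rintro ⟨_, ⟨π, hinj, hπ, rfl⟩, rfl⟩
    exact ⟨π, hinj, hπ, hcost π hπ⟩

theorem isGLB_assignmentCosts_add {w δ : A × T → ℝ} {P : (T → A) → Prop} {s c : ℝ}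
    (hδ : ∀ π, P π → cost δ π = s) (hc : IsGLB (assignmentCosts w P) c) :
    IsGLB (assignmentCosts (w + δ) P) (c + s) := by
  rw [assignmentCosts_add hδ]
  exact (OrderIso.addRight s).isGLB_image'.2 hc

theorem isGLB_sInf_assignmentCosts {w : A × T → ℝ} {P : (T → A) → Prop}
    (hbdd : BddBelow (cost w '' {π | Function.Injective π}))
    (hP : ∃ π : T → A, Function.Injective π ∧ P π) :
    IsGLB (assignmentCosts w P) (sInf (assignmentCosts w P)) := by
  obtain ⟨π, hinj, hπ⟩ := hP
  have hsub : assignmentCosts w P ⊆ cost w '' {π | Function.Injective π} :=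
    fun _ ⟨π, hinj, _, hc⟩ => ⟨π, hinj, hc⟩
  exact isGLB_csInf ⟨cost w π, π, hinj, hπ, rfl⟩ (hbdd.mono hsub)

end AssignmentCosts

theorem exists_injective_apply_eq {α β : Type*} {f : α → β} (hf : Function.Injective f)
    (x : α) (y : β) : ∃ g : α → β, Function.Injective g ∧ g x = y := by
  classical
  let g : α ↪ β := Function.Embedding.setValue ⟨f, hf⟩ x y
  exact ⟨g, g.injective, Function.Embedding.setValue_eq _ x y⟩

theorem exists_injective_apply_ne {α β : Type*} [Nontrivial β] {f : α → β}
    (hf : Function.Injective f) (x : α) (y : β) :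
    ∃ g : α → β, Function.Injective g ∧ g x ≠ y := by
  obtain ⟨z, hz⟩ := exists_ne y
  obtain ⟨g, hg, rfl⟩ := exists_injective_apply_eq hf x z
  exact ⟨g, hg, hz⟩

section Sensitivity

variable {A T : Type*} [Fintype T] {w : A × T → ℝ} {πs : T → A} {a : A} {b : T}

theorem isGLB_cost_add_sens [Nontrivial A] (hinj : Function.Injective πs)
    (hbdd : BddBelow (cost w '' {π | Function.Injective π})) (h : πs b = a) :
    IsGLB (assignmentCosts w fun π => π b ≠ a) (cost w πs + sens w πs a b) := by
  rw [sens, if_pos h, add_sub_cancel]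
  exact isGLB_sInf_assignmentCosts hbdd (exists_injective_apply_ne hinj b a)

theorem isGLB_cost_sub_sens (hinj : Function.Injective πs)
    (hbdd : BddBelow (cost w '' {π | Function.Injective π})) (h : πs b ≠ a) :
    IsGLB (assignmentCosts w fun π => π b = a) (cost w πs - sens w πs a b) := by
  rw [sens, if_neg h, sub_sub_cancel]
  exact isGLB_sInf_assignmentCosts hbdd (exists_injective_apply_eq hinj b a)

end Sensitivity

open Classical in
theorem stmt5_general {A T : Type*} [Nontrivial A] [Fintype T] {w : A × T → ℝ} {πs : T → A}
    (hinj : Function.Injective πs) (hbdd : BddBelow (cost w '' {π | Function.Injective π}))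
    (a : A) (b : T) {wbar : A × T → ℝ}
    (hwbar : wbar = fun e => if e = (a, b) then w e + sens w πs a b else w e) :
    (πs b = a → IsGLB (assignmentCosts wbar fun π => π b ≠ a) (cost wbar πs)) ∧
    (πs b ≠ a → IsGLB (assignmentCosts wbar fun π => π b = a) (cost wbar πs)) := by
  rw [hwbar, ite_add_eq_add_single]
  refine ⟨fun h => ?assigned, fun h => ?unassigned⟩
  case assigned =>
    have hGLB := isGLB_assignmentCosts_add
      (fun π hπ => cost_single_of_ne hπ (sens w πs a b)) (isGLB_cost_add_sens hinj hbdd h)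
    simpa only [cost_add, cost_single_of_eq h, add_zero] using hGLB
  case unassigned =>
    have hGLB := isGLB_assignmentCosts_add
      (fun π hπ => cost_single_of_eq hπ (sens w πs a b)) (isGLB_cost_sub_sens hinj hbdd h)
    simpa only [cost_add, cost_single_of_ne h, add_zero, sub_add_cancel] using hGLB

open Classical in
theorem stmt5 {A T : Type*} [Fintype A] [Fintype T] [Nonempty A] [Nonempty T]
    (hT : 2 ≤ Fintype.card T) (hAT : Fintype.card T ≤ Fintype.card A)
    (w : A × T → ℝ) (πs : T → A)
    (hopt : Optimal w πs)
    (a : A) (b : T)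
    (wbar : A × T → ℝ)
    (hwbar : wbar = fun e => if e = (a, b) then w e + sens w πs a b else w e) :
    (πs b = a →
      sInf {c | ∃ π : T → A, Function.Injective π ∧ π b ≠ a ∧ cost wbar π = c}
        = cost wbar πs) ∧
    (πs b ≠ a →
      sInf {c | ∃ π : T → A, Function.Injective π ∧ π b = a ∧ cost wbar π = c}
        = cost wbar πs) := by
  have : Nontrivial A := Fintype.one_lt_card_iff_nontrivial.1 (hT.trans hAT)
  have h := stmt5_general hopt.1 hopt.bddBelow_cost a b hwbar
  exact ⟨fun hb => (h.1 hb).csInf_eq (h.1 hb).nonempty,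
    fun hb => (h.2 hb).csInf_eq (h.2 hb).nonempty⟩
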